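/- (Spot-only equilibrium emissions.) Suppose real numbers P and q_1,…,q_n satisfy the inverse demand equation P = γ̂ − β Σ_i q_i and q_i = τ_i (P − b_i − η_i P^{CO2}) for every i, and define the spot emissions of generator i as ε_i := η_i Σ_k q_k. Then for every i, ε_i = η_i Σ_k τ_k [ φ ( γ̂ + β Σ_l τ_l (b_l + η_l P^{CO2}) ) − b_k − η_k P^{CO2} ]. -/

import Mathlib

/-- `tau β δ c i = 1 / (β (1 + δ_i) + c_i)`. -/
noncomputable def tau {n : ℕ} (β : ℝ) (δ c : Fin n → ℝ) (i : Fin n) : ℝ :=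
  1 / (β * (1 + δ i) + c i)

/-- `phi β δ c = 1 / (1 + β Σ_i τ_i)`. -/
noncomputable def phi {n : ℕ} (β : ℝ) (δ c : Fin n → ℝ) : ℝ :=
  1 / (1 + β * ∑ i, tau β δ c i)

/-! Each generator offers `q_i = τ_i (P - a_i)` at price `P`, with `a_i = b_i + η_i P^{CO2}`, so
total supply is affine in `P` and the demand equation becomes
`(1 + β Σ τ_i) P = γ̂ + β Σ τ_i a_i`. Hence `P = φ (γ̂ + β Σ τ_i a_i)`, and summing the offers at
this price gives the emissions. -/

theorem tau_pos {n : ℕ} {β : ℝ} {δ c : Fin n → ℝ} {i : Fin n}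
    (hi : 0 < β * (1 + δ i) + c i) : 0 < tau β δ c i :=
  one_div_pos.mpr hi

theorem one_add_mul_sum_tau_pos {n : ℕ} {β : ℝ} {δ c : Fin n → ℝ} (hβ : 0 ≤ β)
    (hpos : ∀ i, 0 < β * (1 + δ i) + c i) : 0 < 1 + β * ∑ i, tau β δ c i := by
  have hτ : 0 ≤ ∑ i, tau β δ c i := Finset.sum_nonneg fun i _ => (tau_pos (hpos i)).le
  positivity

section Market

variable {ι K : Type*} [Fintype ι] [Field K]

theorem price_eq_sub_mul_sum_supply_iff {β γ P : K} {τ a : ι → K}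
    (hne : 1 + β * ∑ i, τ i ≠ 0) :
    P = γ - β * ∑ i, τ i * (P - a i) ↔
      P = 1 / (1 + β * ∑ i, τ i) * (γ + β * ∑ i, τ i * a i) := by
  have supply_affine : ∑ i, τ i * (P - a i) = (∑ i, τ i) * P - ∑ i, τ i * a i := by
    simp only [mul_sub, Finset.sum_sub_distrib, Finset.sum_mul]
  rw [supply_affine, one_div, eq_inv_mul_iff_mul_eq₀ hne]
  constructor <;> intro h <;> linear_combination h

theorem stmt_9_general {β γhat PCO2 P : K} {b η τ q ε : ι → K}
    (hne : 1 + β * ∑ i, τ i ≠ 0)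
    (hdemand : P = γhat - β * ∑ i, q i)
    (hsupply : ∀ i, q i = τ i * (P - b i - η i * PCO2))
    (hε : ∀ i, ε i = η i * ∑ k, q k) :
    ∀ i, ε i = η i * ∑ k, τ k *
      (1 / (1 + β * ∑ j, τ j) * (γhat + β * ∑ l, τ l * (b l + η l * PCO2))
        - b k - η k * PCO2) := by
  simp only [sub_sub] at hsupply ⊢
  simp only [hsupply] at hdemand hε
  have price_eq := (price_eq_sub_mul_sum_supply_iff hne).mp hdemand
  rwa [← price_eq]

end Market

/-- Spot-only equilibrium emissions: if `P = γ̂ − β Σ_i q_i` and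
`q_i = τ_i (P − b_i − η_i P^{CO2})` for every `i`, and the spot emissions of
generator `i` are `ε_i = η_i Σ_k q_k`, then for every `i`,
`ε_i = η_i Σ_k τ_k [ φ ( γ̂ + β Σ_l τ_l (b_l + η_l P^{CO2}) ) − b_k − η_k P^{CO2} ]`. -/
theorem stmt_9 {n : ℕ} (β γhat PCO2 P : ℝ) (b c η δ q ε : Fin n → ℝ)
    (hβ : 0 < β) (hc : ∀ i, 0 ≤ c i)
    (hpos : ∀ i, 0 < β * (1 + δ i) + c i)
    (hdemand : P = γhat - β * ∑ i, q i)
    (hfoc : ∀ i, q i = tau β δ c i * (P - b i - η i * PCO2))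
    (hε : ∀ i, ε i = η i * ∑ k, q k) :
    ∀ i, ε i = η i * ∑ k, tau β δ c k *
      (phi β δ c * (γhat + β * ∑ l, tau β δ c l * (b l + η l * PCO2))
        - b k - η k * PCO2) :=
  stmt_9_general (one_add_mul_sum_tau_pos hβ.le hpos).ne' hdemand hfoc hε
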